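/- The checkers interaction preorder includes silent conversion: for all checkers terms t, u, if t =τ u (where =τ is the reflexive, symmetric, transitive closure of silent β-reduction →τ) then t ≼ctx⊛ u. -/

import Mathlib

set_option autoImplicit false

/-! ### Players -/

inductive Player : Type
  | white
  | black
deriving DecidableEq

/-- The opposite player. -/
def Player.op : Player → Player
  | .white => .black
  | .black => .white

/-- `gamma p q` is `0` if the players agree (silent) and `1` otherwise (interaction). -/
def Player.gamma (p q : Player) : ℕ := if p = q then 0 else 1

/-! ### Ordinary λ-terms (de Bruijn representation) -/

inductive Lam : Type
  | var : ℕ → Lam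
  | lam : Lam → Lam
  | app : Lam → Lam → Lam
deriving DecidableEq

namespace Lam

/-- Shift the free de Bruijn indices ≥ `d` by one. -/
def liftAt : Lam → ℕ → Lam
  | .var n, d => .var (if n < d then n else n + 1)
  | .lam t, d => .lam (t.liftAt (d + 1))
  | .app t u, d => .app (t.liftAt d) (u.liftAt d)

/-- Capture-avoiding substitution of `u` for the de Bruijn index `x`. -/
def subst : Lam → ℕ → Lam → Lam
  | .var n, x, u => if n = x then u else if x < n then .var (n - 1) else .var n
  | .lam t, x, u => .lam (t.subst (x + 1) (u.liftAt 0))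
  | .app t s, x, u => .app (t.subst x u) (s.subst x u)

end Lam

/-- Root β-rule: `(λx.t) u ↦ t[x:=u]`. -/
inductive LBetaRoot : Lam → Lam → Prop
  | beta (t u : Lam) : LBetaRoot (.app (.lam t) u) (t.subst 0 u)

/-- Root η-rule: `λx. t x ↦ t` with `x ∉ FV(t)` (enforced by the lifting). -/
inductive LEtaRoot : Lam → Lam → Prop
  | eta (t : Lam) : LEtaRoot (.lam (.app (t.liftAt 0) (.var 0))) t

/-- Closure of a root relation under all contexts. -/
inductive LFull (R : Lam → Lam → Prop) : Lam → Lam → Prop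
  | root {t u : Lam} : R t u → LFull R t u
  | lam {t u : Lam} : LFull R t u → LFull R (.lam t) (.lam u)
  | appL {t t' : Lam} (u : Lam) : LFull R t t' → LFull R (.app t u) (.app t' u)
  | appR (t : Lam) {u u' : Lam} : LFull R u u' → LFull R (.app t u) (.app t u')

/-- Closure under applicative spine contexts `⟨·⟩ t1 … tk`. -/
inductive LSpine (R : Lam → Lam → Prop) : Lam → Lam → Prop
  | root {t u : Lam} : R t u → LSpine R t u
  | appL {t t' : Lam} (u : Lam) : LSpine R t t' → LSpine R (.app t u) (.app t' u)

/-- Closure under head contexts `λx1…xn.⟨·⟩ t1 … tk`. -/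
inductive LHead (R : Lam → Lam → Prop) : Lam → Lam → Prop
  | spine {t u : Lam} : LSpine R t u → LHead R t u
  | lam {t u : Lam} : LHead R t u → LHead R (.lam t) (.lam u)

/-- β-reduction. -/
def LBeta : Lam → Lam → Prop := LFull LBetaRoot
/-- η-reduction. -/
def LEta : Lam → Lam → Prop := LFull LEtaRoot
/-- Head reduction. -/
def LHStep : Lam → Lam → Prop := LHead LBetaRoot
/-- Multistep head reduction. -/
def LHSteps : Lam → Lam → Prop := Relation.ReflTransGen LHStep

/-- β-conversion (reflexive-symmetric-transitive closure of β-reduction). -/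
def LBetaConv : Lam → Lam → Prop :=
  Relation.ReflTransGen (fun a b => LBeta a b ∨ LBeta b a)
/-- η-conversion. -/
def LEtaConv : Lam → Lam → Prop :=
  Relation.ReflTransGen (fun a b => LEta a b ∨ LEta b a)

/-- Head normal forms: no head step out of `t`. -/
def Lam.LHNF (t : Lam) : Prop := ∀ u, ¬ LHStep t u

/-- Head convergence: `t ⇓h`. -/
def Lam.HConv (t : Lam) : Prop := ∃ h, LHSteps t h ∧ h.LHNF

/-- Ordinary contexts (one hole). -/
inductive LCtx : Type
  | hole : LCtx
  | lam : LCtx → LCtx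
  | appL : LCtx → Lam → LCtx
  | appR : Lam → LCtx → LCtx

/-- Plugging (allowing variable capture). -/
def LCtx.fill : LCtx → Lam → Lam
  | .hole, t => t
  | .lam C, t => .lam (C.fill t)
  | .appL C u, t => .app (C.fill t) u
  | .appR s C, t => .app s (C.fill t)

/-- Head contextual preorder on λ-terms. -/
def CtxLe (t u : Lam) : Prop := ∀ C : LCtx, (C.fill t).HConv → (C.fill u).HConv

/-! ### Checkers terms -/

inductive CTerm : Type
  | var : ℕ → CTerm
  | lam : Player → CTerm → CTerm
  | app : Player → CTerm → CTerm → CTerm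
deriving DecidableEq

namespace CTerm

/-- Shift the free de Bruijn indices ≥ `d` by one. -/
def liftAt : CTerm → ℕ → CTerm
  | .var n, d => .var (if n < d then n else n + 1)
  | .lam p t, d => .lam p (t.liftAt (d + 1))
  | .app p t u, d => .app p (t.liftAt d) (u.liftAt d)

/-- Capture-avoiding substitution of `u` for the de Bruijn index `x`. -/
def subst : CTerm → ℕ → CTerm → CTerm
  | .var n, x, u => if n = x then u else if x < n then .var (n - 1) else .var n
  | .lam p t, x, u => .lam p (t.subst (x + 1) (u.liftAt 0))
  | .app p t s, x, u => .app p (t.subst x u) (s.subst x u)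

/-- The underlying ordinary λ-term of a checkers term. -/
def untag : CTerm → Lam
  | .var n => .var n
  | .lam _ t => .lam t.untag
  | .app _ t u => .app t.untag u.untag

end CTerm

/-- Player lifting: tag every abstraction and application with player `p`. -/
def Lam.tag : Lam → Player → CTerm
  | .var n, _ => .var n
  | .lam t, p => .lam p (t.tag p)
  | .app t u, p => .app p (t.tag p) (u.tag p)

/-- Silent β root rule: the abstraction and the application carry the same player. -/
inductive SilentRoot : CTerm → CTerm → Prop
  | beta (p : Player) (t u : CTerm) : SilentRoot (.app p (.lam p t) u) (t.subst 0 u)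

/-- Interaction β root rule: the application carries the opposite player of the abstraction. -/
inductive InterRoot : CTerm → CTerm → Prop
  | beta (p : Player) (t u : CTerm) : InterRoot (.app p.op (.lam p t) u) (t.subst 0 u)

/-- Closure of a root relation under all checkers contexts. -/
inductive CFull (R : CTerm → CTerm → Prop) : CTerm → CTerm → Prop
  | root {t u : CTerm} : R t u → CFull R t u
  | lam (p : Player) {t u : CTerm} : CFull R t u → CFull R (.lam p t) (.lam p u)
  | appL (p : Player) {t t' : CTerm} (u : CTerm) : CFull R t t' → CFull R (.app p t u) (.app p t' u)
  | appR (p : Player) (t : CTerm) {u u' : CTerm} : CFull R u u' → CFull R (.app p t u) (.app p t u')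

/-- Closure under applicative spine contexts `⟨·⟩ @_{q1} t1 … @_{qk} tk`. -/
inductive CSpine (R : CTerm → CTerm → Prop) : CTerm → CTerm → Prop
  | root {t u : CTerm} : R t u → CSpine R t u
  | appL (p : Player) {t t' : CTerm} (u : CTerm) : CSpine R t t' → CSpine R (.app p t u) (.app p t' u)

/-- Closure under checkers head contexts `λ_{p1}x1…λ_{pn}xn.⟨·⟩ @_{q1} t1 … @_{qk} tk`. -/
inductive CHead (R : CTerm → CTerm → Prop) : CTerm → CTerm → Prop
  | spine {t u : CTerm} : CSpine R t u → CHead R t u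
  | lam (p : Player) {t u : CTerm} : CHead R t u → CHead R (.lam p t) (.lam p u)

/-- Silent β-reduction `→τ`. -/
def StepTau : CTerm → CTerm → Prop := CFull SilentRoot
/-- Interaction β-reduction `→⊛`. -/
def StepInt : CTerm → CTerm → Prop := CFull InterRoot
/-- Checkers β-reduction `→βch`. -/
def StepBch (t u : CTerm) : Prop := StepTau t u ∨ StepInt t u

/-- Silent head reduction `→hτ`. -/
def HStepTau : CTerm → CTerm → Prop := CHead SilentRoot
/-- Interaction head reduction `→h⊛`. -/
def HStepInt : CTerm → CTerm → Prop := CHead InterRoot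
/-- Checkers head reduction `→hch`. -/
def HStepCh (t u : CTerm) : Prop := HStepTau t u ∨ HStepInt t u

/-- Checkers head normal form. -/
def CTerm.HNF (t : CTerm) : Prop := ∀ u, ¬ HStepCh t u

/-- `BigStep t k` means `t ⇓^k`: the (deterministic) checkers head evaluation of `t`
terminates and performs exactly `k` interaction steps. -/
inductive BigStep : CTerm → ℕ → Prop
  | nf {t : CTerm} : t.HNF → BigStep t 0
  | silent {t u : CTerm} {k : ℕ} : HStepTau t u → BigStep u k → BigStep t k
  | inter {t u : CTerm} {k : ℕ} : HStepInt t u → BigStep u k → BigStep t (k + 1)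

/-- `HRed t n i u`: a checkers head reduction sequence from `t` to `u` of length `n`
containing exactly `i` interaction steps. -/
inductive HRed : CTerm → ℕ → ℕ → CTerm → Prop
  | refl (t : CTerm) : HRed t 0 0 t
  | silent {t u s : CTerm} {n i : ℕ} : HStepTau t u → HRed u n i s → HRed t (n + 1) i s
  | inter {t u s : CTerm} {n i : ℕ} : HStepInt t u → HRed u n i s → HRed t (n + 1) (i + 1) s

/-- Checkers contexts (one hole). -/
inductive CCtx : Type
  | hole : CCtx
  | lam : Player → CCtx → CCtx
  | appL : Player → CCtx → CTerm → CCtx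
  | appR : Player → CTerm → CCtx → CCtx

/-- Plugging (allowing variable capture). -/
def CCtx.fill : CCtx → CTerm → CTerm
  | .hole, t => t
  | .lam p C, t => .lam p (C.fill t)
  | .appL p C u, t => .app p (C.fill t) u
  | .appR p s C, t => .app p s (C.fill t)

/-- Player lifting of ordinary contexts. -/
def LCtx.tag : LCtx → Player → CCtx
  | .hole, _ => .hole
  | .lam C, p => .lam p (C.tag p)
  | .appL C u, p => .appL p (C.tag p) (u.tag p)
  | .appR s C, p => .appR p (s.tag p) (C.tag p)

/-- Checkers interaction preorder `≼ctx⊛` on checkers terms. -/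
def IntCtxLe (t u : CTerm) : Prop :=
  ∀ (C : CCtx) (k : ℕ), BigStep (C.fill t) k → BigStep (C.fill u) k

/-- Checkers interaction improvement `≼imp⊛` on checkers terms. -/
def ImpCtxLe (t u : CTerm) : Prop :=
  ∀ (C : CCtx) (k : ℕ), BigStep (C.fill t) k → ∃ k', k' ≤ k ∧ BigStep (C.fill u) k'

/-- Interaction preorder `⊑int` on ordinary λ-terms, via black lifting. -/
def IntLe (t u : Lam) : Prop := IntCtxLe (t.tag .black) (u.tag .black)

/-- Interaction improvement `⊑int·imp` on ordinary λ-terms, via black lifting. -/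
def ImpLe (t u : Lam) : Prop := ImpCtxLe (t.tag .black) (u.tag .black)

/-- Interaction equivalence `≡int`. -/
def IntEq (t u : Lam) : Prop := IntLe t u ∧ IntLe u t

/-- Silent conversion `=τ`: reflexive-symmetric-transitive closure of `→τ`. -/
def SilentConv : CTerm → CTerm → Prop :=
  Relation.ReflTransGen (fun a b => StepTau a b ∨ StepTau b a)

/-! ### De Bruijn commutation lemmas -/

theorem CTerm.lift_lift (t : CTerm) : ∀ (d e : ℕ), d ≤ e →
    (t.liftAt e).liftAt d = (t.liftAt d).liftAt (e + 1) := by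
  induction t with
  | var n => intro d e h; simp only [CTerm.liftAt]; congr 1; split_ifs <;> omega
  | lam p t ih => intro d e h; simp only [CTerm.liftAt]; rw [ih (d+1) (e+1) (by omega)]
  | app p t u iht ihu => intro d e h; simp only [CTerm.liftAt]; rw [iht d e h, ihu d e h]

theorem CTerm.lift_subst_low (t : CTerm) : ∀ (x d : ℕ) (u : CTerm), x ≤ d →
    (t.subst x u).liftAt d = (t.liftAt (d + 1)).subst x (u.liftAt d) := by
  induction t with
  | var n =>
    intro x d u h
    rcases lt_trichotomy n x with h1 | h1 | h1
    · have e1 : n ≠ x := by omega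
      have e2 : ¬ x < n := by omega
      have e3 : n < d + 1 := by omega
      have e4 : n < d := by omega
      simp [CTerm.subst, CTerm.liftAt, e1, e2, e3, e4]
    · subst h1
      have e3 : n < d + 1 := by omega
      simp [CTerm.subst, CTerm.liftAt, e3]
    · have e1 : n ≠ x := by omega
      by_cases e3 : n < d + 1
      · have e4 : n - 1 < d := by omega
        simp [CTerm.subst, CTerm.liftAt, e1, h1, e3, e4]
      · have e4 : ¬ n - 1 < d := by omega
        have e5 : n + 1 ≠ x := by omega
        have e6 : x < n + 1 := by omega
        simp only [CTerm.subst, CTerm.liftAt, e1, h1, e3, e4, e5, e6, if_true, if_false]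
        congr 1; omega
  | lam p t ih =>
    intro x d u h
    simp only [CTerm.subst, CTerm.liftAt]
    rw [ih (x+1) (d+1) _ (by omega), CTerm.lift_lift u 0 d (by omega)]
  | app p t s iht ihs =>
    intro x d u h
    simp only [CTerm.subst, CTerm.liftAt]; rw [iht _ _ _ h, ihs _ _ _ h]

theorem CTerm.lift_subst_high (t : CTerm) : ∀ (x d : ℕ) (u : CTerm), d ≤ x →
    (t.subst x u).liftAt d = (t.liftAt d).subst (x + 1) (u.liftAt d) := by
  induction t with
  | var n =>
    intro x d u h
    rcases lt_trichotomy n x with h1 | h1 | h1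
    · have e1 : n ≠ x := by omega
      have e2 : ¬ x < n := by omega
      by_cases e3 : n < d
      · have e4 : n ≠ x + 1 := by omega
        have e5 : ¬ x + 1 < n := by omega
        simp [CTerm.subst, CTerm.liftAt, e1, e2, e3, e4, e5]
      · simp [CTerm.subst, CTerm.liftAt, e1, e2, e3]
    · subst h1
      have e3 : ¬ n < d := by omega
      simp [CTerm.subst, CTerm.liftAt, e3]
    · have e1 : n ≠ x := by omega
      have e3 : ¬ n < d := by omega
      have e4 : ¬ n - 1 < d := by omega
      simp only [CTerm.subst, CTerm.liftAt, e1, h1, e3, e4, if_true, if_false]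
      rw [if_neg (by omega), if_pos (by omega)]
      congr 1; omega
  | lam p t ih =>
    intro x d u h
    simp only [CTerm.subst, CTerm.liftAt]
    rw [ih (x+1) (d+1) _ (by omega), CTerm.lift_lift u 0 d (by omega)]
  | app p t s iht ihs =>
    intro x d u h
    simp only [CTerm.subst, CTerm.liftAt]; rw [iht _ _ _ h, ihs _ _ _ h]

theorem CTerm.lift_subst_cancel (t : CTerm) : ∀ (d : ℕ) (u : CTerm),
    (t.liftAt d).subst d u = t := by
  induction t with
  | var n =>
    intro d u
    by_cases h : n < d
    · have e1 : n ≠ d := by omega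
      have e2 : ¬ d < n := by omega
      simp [CTerm.subst, CTerm.liftAt, h, e1, e2]
    · have e1 : n + 1 ≠ d := by omega
      have e2 : d < n + 1 := by omega
      simp [CTerm.subst, CTerm.liftAt, h, e1, e2]
  | lam p t ih => intro d u; simp only [CTerm.subst, CTerm.liftAt]; rw [ih]
  | app p t s iht ihs => intro d u; simp only [CTerm.subst, CTerm.liftAt]; rw [iht, ihs]

theorem CTerm.subst_subst (t : CTerm) : ∀ (x y : ℕ) (u v : CTerm), x ≤ y →
    (t.subst x u).subst y v = (t.subst (y + 1) (v.liftAt x)).subst x (u.subst y v) := by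
  induction t with
  | var n =>
    intro x y u v h
    rcases lt_trichotomy n x with h1 | h1 | h1
    · have e1 : n ≠ x := by omega
      have e2 : ¬ x < n := by omega
      have e3 : n ≠ y := by omega
      have e4 : ¬ y < n := by omega
      have e5 : n ≠ y + 1 := by omega
      have e6 : ¬ y + 1 < n := by omega
      simp [CTerm.subst, e1, e2, e3, e4, e5, e6]
    · subst h1
      have e5 : n ≠ y + 1 := by omega
      have e6 : ¬ y + 1 < n := by omega
      simp [CTerm.subst, e5, e6]
    · have e1 : n ≠ x := by omega
      rcases lt_trichotomy n (y + 1) with h2 | h2 | h2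
      · have e3 : n - 1 ≠ y := by omega
        have e4 : ¬ y < n - 1 := by omega
        have e5 : n ≠ y + 1 := by omega
        have e6 : ¬ y + 1 < n := by omega
        simp [CTerm.subst, e1, h1, e3, e4, e5, e6]
      · subst h2
        simp [CTerm.subst, e1, h1, CTerm.lift_subst_cancel]
      · have e3 : n - 1 ≠ y := by omega
        have e4 : y < n - 1 := by omega
        have e5 : n ≠ y + 1 := by omega
        have e7 : n - 1 ≠ x := by omega
        have e8 : x < n - 1 := by omega
        simp [CTerm.subst, e1, h1, e3, e4, e5, h2, e7, e8]
  | lam p t ih =>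
    intro x y u v h
    simp only [CTerm.subst]
    rw [ih (x+1) (y+1) _ _ (by omega), CTerm.lift_lift v 0 x (by omega),
      CTerm.lift_subst_high u y 0 v (by omega)]
  | app p t s iht ihs =>
    intro x y u v h
    simp only [CTerm.subst]; rw [iht _ _ _ _ h, ihs _ _ _ _ h]

/-! ### Silent weak head reduction -/

/-- Silent spine (weak head) reduction, many steps. -/
abbrev WSteps : CTerm → CTerm → Prop := Relation.ReflTransGen (CSpine SilentRoot)

theorem CSpine.silent_lift {t u : CTerm} (h : CSpine SilentRoot t u) (d : ℕ) :
    CSpine SilentRoot (t.liftAt d) (u.liftAt d) := by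
  induction h with
  | root h =>
    cases h with
    | beta p t u =>
      rw [CTerm.lift_subst_low _ _ _ _ (Nat.zero_le d)]
      exact .root (.beta p _ _)
  | appL p u h ih => exact .appL p _ ih

theorem CSpine.silent_subst {t u : CTerm} (h : CSpine SilentRoot t u) (x : ℕ) (r : CTerm) :
    CSpine SilentRoot (t.subst x r) (u.subst x r) := by
  induction h with
  | root h =>
    cases h with
    | beta p t u =>
      rw [CTerm.subst_subst _ _ _ _ _ (Nat.zero_le x)]
      exact .root (.beta p _ _)
  | appL p u h ih => exact .appL p _ ih

theorem WSteps.lift {t u : CTerm} (h : WSteps t u) (d : ℕ) :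
    WSteps (t.liftAt d) (u.liftAt d) := by
  induction h with
  | refl => exact .refl
  | tail _ h ih => exact ih.tail (h.silent_lift d)

theorem WSteps.subst {t u : CTerm} (h : WSteps t u) (x : ℕ) (r : CTerm) :
    WSteps (t.subst x r) (u.subst x r) := by
  induction h with
  | refl => exact .refl
  | tail _ h ih => exact ih.tail (h.silent_subst x r)

theorem WSteps.appL {t u : CTerm} (h : WSteps t u) (p : Player) (r : CTerm) :
    WSteps (.app p t r) (.app p u r) := by
  induction h with
  | refl => exact .refl
  | tail _ h ih => exact ih.tail (.appL p r h)

/-! ### Standard silent reductions -/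

inductive StdRed : CTerm → CTerm → Prop
  | var {t : CTerm} {n : ℕ} : WSteps t (.var n) → StdRed t (.var n)
  | lam {t s s' : CTerm} {p : Player} : WSteps t (.lam p s) → StdRed s s' → StdRed t (.lam p s')
  | app {t s s' r r' : CTerm} {p : Player} : WSteps t (.app p s r) → StdRed s s' → StdRed r r' →
      StdRed t (.app p s' r')

theorem StdRed.refl (t : CTerm) : StdRed t t := by
  induction t with
  | var n => exact .var .refl
  | lam p t ih => exact .lam .refl ih
  | app p t u iht ihu => exact .app .refl iht ihu

theorem StdRed.prepend {t t' u : CTerm} (h : WSteps t t') (hs : StdRed t' u) : StdRed t u := by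
  cases hs with
  | var h1 => exact .var (h.trans h1)
  | lam h1 h2 => exact .lam (h.trans h1) h2
  | app h1 h2 h3 => exact .app (h.trans h1) h2 h3

theorem StdRed.lift {t u : CTerm} (h : StdRed t u) : ∀ d, StdRed (t.liftAt d) (u.liftAt d) := by
  induction h with
  | var h => intro d; exact StdRed.prepend (h.lift d) (StdRed.refl _)
  | lam h _ ih => intro d; exact .lam (h.lift d) (ih _)
  | app h _ _ ih1 ih2 => intro d; exact .app (h.lift d) (ih1 _) (ih2 _)

theorem StdRed.subst {t u : CTerm} (h : StdRed t u) : ∀ (x : ℕ) {r r' : CTerm}, StdRed r r' →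
    StdRed (t.subst x r) (u.subst x r') := by
  induction h with
  | @var t n h =>
    intro x r r' hr
    refine StdRed.prepend (h.subst x r) ?_
    simp only [CTerm.subst]
    split_ifs
    · exact hr
    · exact StdRed.refl _
    · exact StdRed.refl _
  | lam h _ ih => intro x r r' hr; exact .lam (h.subst x r) (ih _ (hr.lift 0))
  | app h _ _ ih1 ih2 => intro x r r' hr; exact .app (h.subst x r) (ih1 _ hr) (ih2 _ hr)

theorem StepTau.std {t u : CTerm} (h : StepTau t u) : StdRed t u := by
  unfold StepTau at h
  induction h with
  | root h => exact StdRed.prepend (.single (.root h)) (StdRed.refl _)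
  | lam p _ ih => exact .lam .refl ih
  | appL p u _ ih => exact .app .refl ih (StdRed.refl _)
  | appR p t _ ih => exact .app .refl (StdRed.refl _) ih

/-! ### Simulations -/

/-- Root relations that are beta rules determined by the two players only. -/
def BetaLike (R : CTerm → CTerm → Prop) : Prop :=
  ∀ a b, R a b → ∃ p q s r, a = .app p (.lam q s) r ∧ b = s.subst 0 r ∧
    ∀ s' r', R (.app p (.lam q s') r') (s'.subst 0 r')

theorem betaLike_silent : BetaLike SilentRoot := by
  rintro a b ⟨p, t, u⟩
  exact ⟨p, p, t, u, rfl, rfl, fun s' r' => .beta p s' r'⟩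

theorem betaLike_inter : BetaLike InterRoot := by
  rintro a b ⟨p, t, u⟩
  exact ⟨p.op, p, t, u, rfl, rfl, fun s' r' => .beta p s' r'⟩

theorem CSpine.not_lam {R : CTerm → CTerm → Prop} (hR : BetaLike R) {p : Player} {s u : CTerm}
    (h : CSpine R (.lam p s) u) : False := by
  cases h with
  | root h => obtain ⟨_, _, _, _, h, _⟩ := hR _ _ h; cases h

theorem CSpine.not_var {R : CTerm → CTerm → Prop} (hR : BetaLike R) {n : ℕ} {u : CTerm}
    (h : CSpine R (.var n) u) : False := by
  cases h with
  | root h => obtain ⟨_, _, _, _, h, _⟩ := hR _ _ h; cases h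

theorem CSpine.det {R R' : CTerm → CTerm → Prop} (hR : BetaLike R) (hR' : BetaLike R')
    {t u v : CTerm} (h : CSpine R t u) : CSpine R' t v → u = v := by
  induction h generalizing v with
  | root h =>
    obtain ⟨p, q, s, r, rfl, rfl, _⟩ := hR _ _ h
    intro h'
    cases h' with
    | root h' => obtain ⟨_, _, _, _, e, rfl, _⟩ := hR' _ _ h'; cases e; rfl
    | appL _ _ h' => exact (h'.not_lam hR').elim
  | appL p u h ih =>
    intro h'
    cases h' with
    | root h' => obtain ⟨_, _, _, _, e, rfl, _⟩ := hR' _ _ h'; cases e; exact (h.not_lam hR).elim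
    | appL _ _ h' => rw [ih h']

theorem CSpine.disj {t u v : CTerm} (h : CSpine SilentRoot t u) : CSpine InterRoot t v → False := by
  induction h generalizing v with
  | root h =>
    intro h'
    cases h with
    | beta p s r =>
      cases h' with
      | root h' =>
        generalize ha : CTerm.app p (.lam p s) r = a at h'
        cases h' with
        | beta q s' r' => cases q <;> cases p <;> simp [Player.op] at ha
      | appL _ _ h' => exact h'.not_lam betaLike_inter
  | appL p u h ih =>
    intro h'
    cases h' with
    | root h' =>
      obtain ⟨_, _, _, _, e, rfl, _⟩ := betaLike_inter _ _ h'
      cases e; exact h.not_lam betaLike_silent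
    | appL _ _ h' => exact ih h'

theorem CHead.disj {t u v : CTerm} (h : CHead SilentRoot t u) : CHead InterRoot t v → False := by
  induction h generalizing v with
  | spine h =>
    intro h'
    cases h' with
    | spine h' => exact h.disj h'
    | lam p h' => exact h.not_lam betaLike_silent
  | lam p h ih =>
    intro h'
    cases h' with
    | spine h' => exact h'.not_lam betaLike_inter
    | lam p h' => exact ih h'

theorem WSteps.of_lam {p : Player} {s u : CTerm} (h : WSteps (.lam p s) u) : u = .lam p s := by
  rcases h.cases_head with h | ⟨c, h, _⟩
  · exact h.symm
  · exact (h.not_lam betaLike_silent).elim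

theorem StdRed.of_lam {p : Player} {s u : CTerm} (h : StdRed (.lam p s) u) :
    ∃ s', u = .lam p s' ∧ StdRed s s' := by
  cases h with
  | var h => cases h.of_lam
  | lam h h2 => cases h.of_lam; exact ⟨_, rfl, h2⟩
  | app h _ _ => cases h.of_lam

theorem StdRed.forward_spine {R : CTerm → CTerm → Prop} (hR : BetaLike R) {t u : CTerm}
    (h : StdRed t u) : ∀ {t'}, CSpine R t t' →
      (CSpine SilentRoot t t' ∧ StdRed t' u) ∨ ∃ u', CSpine R u u' ∧ StdRed t' u' := by
  induction h with
  | var h =>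
    intro t' ht
    rcases h.cases_head with rfl | ⟨c, h1, h2⟩
    · exact (ht.not_var hR).elim
    · obtain rfl := h1.det betaLike_silent hR ht
      exact .inl ⟨h1, .var h2⟩
  | lam h hs _ =>
    intro t' ht
    rcases h.cases_head with rfl | ⟨c, h1, h2⟩
    · exact (ht.not_lam hR).elim
    · obtain rfl := h1.det betaLike_silent hR ht
      exact .inl ⟨h1, .lam h2 hs⟩
  | app h hs hr ih _ =>
    intro t' ht
    rcases h.cases_head with rfl | ⟨c, h1, h2⟩
    · cases ht with
      | root h =>
        obtain ⟨_, _, _, _, e, rfl, h3⟩ := hR _ _ h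
        cases e
        obtain ⟨s0, rfl, h4⟩ := hs.of_lam
        exact .inr ⟨_, .root (h3 _ _), h4.subst 0 hr⟩
      | appL _ _ h =>
        rcases ih h with ⟨h5, h6⟩ | ⟨u', h5, h6⟩
        · exact .inl ⟨.appL _ _ h5, .app .refl h6 hr⟩
        · exact .inr ⟨_, .appL _ _ h5, .app .refl h6 hr⟩
    · obtain rfl := h1.det betaLike_silent hR ht
      exact .inl ⟨h1, .app h2 hs hr⟩

theorem StdRed.forward {R : CTerm → CTerm → Prop} (hR : BetaLike R) {t t' : CTerm}
    (ht : CHead R t t') : ∀ {u}, StdRed t u →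
      (CHead SilentRoot t t' ∧ StdRed t' u) ∨ ∃ u', CHead R u u' ∧ StdRed t' u' := by
  induction ht with
  | spine ht =>
    intro u h
    rcases h.forward_spine hR ht with ⟨h1, h2⟩ | ⟨u', h1, h2⟩
    · exact .inl ⟨.spine h1, h2⟩
    · exact .inr ⟨u', .spine h1, h2⟩
  | lam p ht ih =>
    intro u h
    obtain ⟨s', rfl, hs⟩ := h.of_lam
    rcases ih hs with ⟨h1, h2⟩ | ⟨u', h1, h2⟩
    · exact .inl ⟨.lam p h1, .lam .refl h2⟩
    · exact .inr ⟨_, .lam p h1, .lam .refl h2⟩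

/-- Silent head reduction, many steps. -/
abbrev HSteps : CTerm → CTerm → Prop := Relation.ReflTransGen HStepTau

theorem WSteps.head {t u : CTerm} (h : WSteps t u) : HSteps t u := by
  induction h with
  | refl => exact .refl
  | tail _ h ih => exact ih.tail (.spine h)

theorem HSteps.lam {t u : CTerm} (h : HSteps t u) (p : Player) : HSteps (.lam p t) (.lam p u) := by
  induction h with
  | refl => exact .refl
  | tail _ h ih => exact ih.tail (.lam p h)

theorem StdRed.backward_spine {R : CTerm → CTerm → Prop} (hR : BetaLike R) {u u' : CTerm}
    (hu : CSpine R u u') : ∀ {t}, StdRed t u →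
      ∃ t1 t', WSteps t t1 ∧ CSpine R t1 t' ∧ StdRed t' u' := by
  induction hu with
  | root h =>
    obtain ⟨p, q, s, r, rfl, rfl, h3⟩ := hR _ _ h
    intro t ht
    cases ht with
    | app h1 h2 hr =>
      cases h2 with
      | lam h4 hs =>
        exact ⟨_, _, h1.trans (h4.appL _ _), .root (h3 _ _), hs.subst 0 hr⟩
  | appL p r h ih =>
    intro t ht
    cases ht with
    | app h1 h2 hr =>
      obtain ⟨t1, t', h3, h4, h5⟩ := ih h2
      exact ⟨_, _, h1.trans (h3.appL _ _), .appL _ _ h4, .app .refl h5 hr⟩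

theorem StdRed.backward {R : CTerm → CTerm → Prop} (hR : BetaLike R) {u u' : CTerm}
    (hu : CHead R u u') : ∀ {t}, StdRed t u →
      ∃ t1 t', HSteps t t1 ∧ CHead R t1 t' ∧ StdRed t' u' := by
  induction hu with
  | spine h =>
    intro t ht
    obtain ⟨t1, t', h1, h2, h3⟩ := ht.backward_spine hR h
    exact ⟨t1, t', h1.head, .spine h2, h3⟩
  | lam p h ih =>
    intro t ht
    cases ht with
    | lam h1 hs =>
      obtain ⟨t1, t', h2, h3, h4⟩ := ih hs
      exact ⟨_, _, h1.head.trans (h2.lam p), .lam p h3, .lam .refl h4⟩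

/-- Some head step exists out of `t` via `R`-redexes of the two kinds. -/
theorem hnf_forward {t u : CTerm} (h : StdRed t u) (ht : t.HNF) : u.HNF := by
  have key : ∀ R, BetaLike R → (∀ a b, CHead R a b → HStepCh a b) → ∀ u', ¬ CHead R u u' := by
    intro R hR hc u' hu
    obtain ⟨t1, t', h1, h2, _⟩ := h.backward hR hu
    rcases h1.cases_head with rfl | ⟨c, h1, _⟩
    · exact ht _ (hc _ _ h2)
    · exact ht _ (.inl h1)
  rintro u' (hu | hu)
  · exact key _ betaLike_silent (fun _ _ h => .inl h) _ hu
  · exact key _ betaLike_inter (fun _ _ h => .inr h) _ hu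

/-- The term has no spine step of either kind. -/
def SpineNF (t : CTerm) : Prop :=
  (∀ u, ¬ CSpine SilentRoot t u) ∧ ∀ u, ¬ CSpine InterRoot t u

theorem app_lam_step (p q : Player) (s r : CTerm) :
    CSpine SilentRoot (.app p (.lam q s) r) (s.subst 0 r) ∨
    CSpine InterRoot (.app p (.lam q s) r) (s.subst 0 r) := by
  cases p <;> cases q
  · exact .inl (.root (.beta _ _ _))
  · exact .inr (.root (.beta .black _ _))
  · exact .inr (.root (.beta .white _ _))
  · exact .inl (.root (.beta _ _ _))

theorem SpineNF.app_inv {p : Player} {s r : CTerm} (h : SpineNF (.app p s r)) :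
    SpineNF s ∧ ∀ q s', s ≠ .lam q s' := by
  refine ⟨⟨fun u hu => h.1 _ (.appL p r hu), fun u hu => h.2 _ (.appL p r hu)⟩, ?_⟩
  rintro q s' rfl
  rcases app_lam_step p q s' r with h1 | h1
  · exact h.1 _ h1
  · exact h.2 _ h1

theorem SpineNF.app {p : Player} {s r : CTerm} (h : SpineNF s) (hl : ∀ q s', s ≠ .lam q s') :
    SpineNF (.app p s r) := by
  have key : ∀ R, BetaLike R → (∀ u, ¬ CSpine R s u) → ∀ u, ¬ CSpine R (.app p s r) u := by
    intro R hR hn u hu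
    cases hu with
    | root h => obtain ⟨_, _, _, _, e, _⟩ := hR _ _ h; cases e; exact hl _ _ rfl
    | appL _ _ h => exact hn _ h
  exact ⟨key _ betaLike_silent h.1, key _ betaLike_inter h.2⟩

theorem spine_backward {t u : CTerm} (h : StdRed t u) : SpineNF u → (∀ q s, u ≠ .lam q s) →
    ∃ t', WSteps t t' ∧ SpineNF t' ∧ ∀ q s, t' ≠ .lam q s := by
  induction h with
  | var h =>
    intro _ _
    exact ⟨_, h, ⟨fun _ h => h.not_var betaLike_silent, fun _ h => h.not_var betaLike_inter⟩,
      by simp⟩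
  | lam _ _ _ => intro _ h; exact (h _ _ rfl).elim
  | app h hs hr ih _ =>
    intro h1 _
    obtain ⟨h2, h3⟩ := h1.app_inv
    obtain ⟨t', h4, h5, h6⟩ := ih h2 h3
    exact ⟨_, h.trans (h4.appL _ _), h5.app h6, by simp⟩

theorem SpineNF.hnf {t : CTerm} (h : SpineNF t) (hl : ∀ q s, t ≠ .lam q s) : t.HNF := by
  rintro u (hu | hu)
  · cases hu with
    | spine h' => exact h.1 _ h'
    | lam _ _ => exact hl _ _ rfl
  · cases hu with
    | spine h' => exact h.2 _ h'
    | lam _ _ => exact hl _ _ rfl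

theorem CTerm.HNF.lam {t : CTerm} (h : t.HNF) (p : Player) : (CTerm.lam p t).HNF := by
  rintro u (hu | hu)
  · cases hu with
    | spine h' => exact h'.not_lam betaLike_silent
    | lam _ h' => exact h _ (.inl h')
  · cases hu with
    | spine h' => exact h'.not_lam betaLike_inter
    | lam _ h' => exact h _ (.inr h')

theorem hnf_backward (u : CTerm) : ∀ {t}, StdRed t u → u.HNF → ∃ t', HSteps t t' ∧ t'.HNF := by
  have main : ∀ u : CTerm, (∀ q s, u ≠ .lam q s) → ∀ {t}, StdRed t u → u.HNF →
      ∃ t', HSteps t t' ∧ t'.HNF := by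
    intro u hl t h hn
    obtain ⟨t', h1, h2, h3⟩ := spine_backward h
      ⟨fun _ h => hn _ (.inl (.spine h)), fun _ h => hn _ (.inr (.spine h))⟩ hl
    exact ⟨t', h1.head, h2.hnf h3⟩
  induction u with
  | var n => exact main _ (by simp)
  | app p s r _ _ => exact main _ (by simp)
  | lam p s ih =>
    intro t h hn
    cases h with
    | lam h1 hs =>
      have hn' : s.HNF := by
        rintro v (hv | hv)
        · exact hn _ (.inl (.lam p hv))
        · exact hn _ (.inr (.lam p hv))
      obtain ⟨t', h2, h3⟩ := ih hs hn'
      exact ⟨_, h1.head.trans (h2.lam p), h3.lam p⟩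

theorem BigStep.prepend {t u : CTerm} {k : ℕ} (h : HSteps t u) (hu : BigStep u k) :
    BigStep t k := by
  induction h using Relation.ReflTransGen.head_induction_on with
  | refl => exact hu
  | head h _ ih => exact .silent h ih

theorem BigStep.std_forward {t : CTerm} {k : ℕ} (h : BigStep t k) :
    ∀ {u}, StdRed t u → BigStep u k := by
  induction h with
  | nf h => intro u hs; exact .nf (hnf_forward hs h)
  | silent h _ ih =>
    intro u hs
    rcases hs.forward betaLike_silent h with ⟨_, h2⟩ | ⟨u', h1, h2⟩
    · exact ih h2
    · exact .silent h1 (ih h2)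
  | inter h _ ih =>
    intro u hs
    rcases hs.forward betaLike_inter h with ⟨h1, _⟩ | ⟨u', h1, h2⟩
    · exact (h1.disj h).elim
    · exact .inter h1 (ih h2)

theorem BigStep.std_backward {u : CTerm} {k : ℕ} (h : BigStep u k) :
    ∀ {t}, StdRed t u → BigStep t k := by
  induction h with
  | nf h =>
    intro t hs
    obtain ⟨t', h1, h2⟩ := hnf_backward _ hs h
    exact BigStep.prepend h1 (.nf h2)
  | silent h _ ih =>
    intro t hs
    obtain ⟨t1, t', h1, h2, h3⟩ := hs.backward betaLike_silent h
    exact BigStep.prepend h1 (.silent h2 (ih h3))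
  | inter h _ ih =>
    intro t hs
    obtain ⟨t1, t', h1, h2, h3⟩ := hs.backward betaLike_inter h
    exact BigStep.prepend h1 (.inter h2 (ih h3))

theorem StepTau.fill {t u : CTerm} (h : StepTau t u) (C : CCtx) :
    StepTau (C.fill t) (C.fill u) := by
  induction C with
  | hole => exact h
  | lam p C ih => exact .lam p ih
  | appL p C r ih => exact .appL p r ih
  | appR p s C ih => exact .appR p s ih

/-- The checkers interaction preorder includes silent conversion. -/
theorem silent_conv_included_in_interaction_preorder (t u : CTerm)
    (h : SilentConv t u) : IntCtxLe t u := by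
  intro C k ht
  unfold SilentConv at h
  induction h with
  | refl => exact ht
  | tail _ h ih =>
    rcases h with h | h
    · exact ih.std_forward (h.fill C).std
    · exact ih.std_backward (h.fill C).std
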